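/- With the setup of the mixDDPM reverse effort (clusters X₁,…,X_K with means c_i, weights p_i, x₀ uniform on X, and z ~ N(c_{D(x₀)}, I_d) conditionally independent of x₀ given the cluster), the mixed reverse effort equals the standard reverse effort minus ∑_{i=1}^K p_i ‖c_i‖²: E[‖x₀ − z_mix‖²] = E[‖x₀ − z_std‖²] − ∑_i p_i ‖c_i‖², where z_std ~ N(0, I_d) is independent of x₀. -/

import Mathlib

open MeasureTheory ProbabilityTheory Real

/-- The isotropic Gaussian measure `N(c, v I)` on `ℝ^d`. -/
noncomputable def gaussianPi (d : ℕ) (c : Fin d → ℝ) (v : NNReal) :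
    Measure (Fin d → ℝ) :=
  Measure.pi fun i => gaussianReal (c i) v

/-- Expected squared distance to an independent Gaussian vector. -/
lemma effort_aux {d : ℕ} {Ω : Type*} [MeasurableSpace Ω] (μ : Measure Ω)
    [IsProbabilityMeasure μ] (x z : Ω → Fin d → ℝ) (c : Fin d → ℝ)
    (hx : Measurable x) (hz : Measurable z)
    (hL : ∀ j, MemLp (fun ω => x ω j) 2 μ)
    (hlaw : Measure.map z μ = gaussianPi d c 1) (hind : IndepFun x z μ) :
    Integrable (fun ω => ∑ j, (x ω j - z ω j) ^ 2) μ ∧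
    ∫ ω, ∑ j, (x ω j - z ω j) ^ 2 ∂μ
      = ∑ j, ((∫ ω, (x ω j) ^ 2 ∂μ) - 2 * (∫ ω, x ω j ∂μ) * c j + (c j ^ 2 + 1)) := by
  have hmap : ∀ j, Measure.map (fun ω => z ω j) μ = gaussianReal (c j) 1 := by
    intro j
    have h1 := (measurePreserving_eval (fun i => gaussianReal (c i) 1) j).map_eq
    have h2 : Measure.map (fun ω => z ω j) μ
        = Measure.map (Function.eval j) (Measure.map z μ) := by
      rw [Measure.map_map (measurable_pi_apply j) hz]
      rfl
    rw [h2, hlaw]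
    exact h1
  have hzj : ∀ j, Measurable (fun ω => z ω j) := fun j => (measurable_pi_apply j).comp hz
  have hxj : ∀ j, Measurable (fun ω => x ω j) := fun j => (measurable_pi_apply j).comp hx
  have hzL : ∀ j, MemLp (fun ω => z ω j) 2 μ := by
    intro j
    have h := memLp_id_gaussianReal' (μ := c j) (v := 1) 2 (by norm_num)
    rw [← hmap j] at h
    exact (memLp_map_measure_iff aestronglyMeasurable_id (hzj j).aemeasurable).1 h
  have hz1 : ∀ j, ∫ ω, z ω j ∂μ = c j := by
    intro j
    have h := integral_id_gaussianReal (μ := c j) (v := 1)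
    rw [← hmap j, integral_map (hzj j).aemeasurable (by fun_prop)] at h
    exact h
  have hz2 : ∀ j, ∫ ω, (z ω j) ^ 2 ∂μ = c j ^ 2 + 1 := by
    intro j
    have h := variance_id_gaussianReal (μ := c j) (v := 1)
    rw [← hmap j, variance_id_map (hzj j).aemeasurable, variance_eq_sub (hzL j), hz1] at h
    simp only [Pi.pow_apply, NNReal.coe_one] at h
    linarith
  have hindj : ∀ j, IndepFun (fun ω => x ω j) (fun ω => z ω j) μ := fun j =>
    hind.comp (measurable_pi_apply j) (measurable_pi_apply j)
  have hI : ∀ j, Integrable (fun ω => (x ω j - z ω j) ^ 2) μ := fun j =>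
    ((hL j).sub (hzL j)).integrable_sq
  refine ⟨integrable_finsetSum _ fun j _ => hI j, ?_⟩
  rw [integral_finsetSum _ fun j _ => hI j]
  refine Finset.sum_congr rfl fun j _ => ?_
  have hm : Integrable (fun ω => x ω j * z ω j) μ := (hL j).integrable_mul (hzL j)
  have e : ∀ ω, (x ω j - z ω j) ^ 2 = (x ω j) ^ 2 - 2 * (x ω j * z ω j) + (z ω j) ^ 2 :=
    fun ω => by ring
  simp_rw [e]
  have hA := (hL j).integrable_sq
  have hB := hm.const_mul 2
  have hAB : Integrable (fun ω => (x ω j) ^ 2 - 2 * (x ω j * z ω j)) μ := hA.sub hB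
  rw [integral_add hAB (hzL j).integrable_sq, integral_sub hA hB,
    integral_const_mul,
    (hindj j).integral_fun_mul_eq_mul_integral (hxj j).aestronglyMeasurable
      (hzj j).aestronglyMeasurable, hz1, hz2]
  ring

/-- Proposition 1 (effort reduction): with the mixDDPM coupling
(`x₀` uniform on `X`, `z_mix ~ N(c_{D(x₀)}, I_d)` conditionally independent of
`x₀` given the cluster) and `z_std ~ N(0, I_d)` independent of `x₀`,
`E[‖x₀ − z_mix‖²] = E[‖x₀ − z_std‖²] − ∑ᵢ pᵢ ‖cᵢ‖²`. -/
theorem stmt3 {d K : ℕ} {Ω : Type*} [MeasureSpace Ω]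
    [IsProbabilityMeasure (ℙ : Measure Ω)]
    (X : Finset (Fin d → ℝ)) (hX : X.Nonempty)
    (Xc : Fin K → Finset (Fin d → ℝ))
    (hne : ∀ i, (Xc i).Nonempty)
    (hdisj : ∀ i j, i ≠ j → Disjoint (Xc i) (Xc j))
    (hcover : ∀ x, x ∈ X ↔ ∃ i, x ∈ Xc i)
    (c : Fin K → Fin d → ℝ)
    (hc : ∀ i j, c i j = (∑ x ∈ Xc i, x j) / (Xc i).card)
    (p : Fin K → ℝ) (hp : ∀ i, p i = (Xc i).card / X.card)
    (x₀ zmix zstd : Ω → Fin d → ℝ)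
    (hx : Measurable x₀) (hzm : Measurable zmix) (hzs : Measurable zstd)
    (hxlaw : Measure.map x₀ ℙ = (PMF.uniformOfFinset X hX).toMeasure)
    (hzmlaw : ∀ i, Measure.map zmix
        (ℙ[|x₀ ⁻¹' (Xc i : Set (Fin d → ℝ))]) = gaussianPi d (c i) 1)
    (hzmindep : ∀ i, IndepFun x₀ zmix (ℙ[|x₀ ⁻¹' (Xc i : Set (Fin d → ℝ))]))
    (hzslaw : Measure.map zstd ℙ = gaussianPi d 0 1)
    (hzsindep : IndepFun x₀ zstd ℙ) :
    ∫ ω, ∑ j, (x₀ ω j - zmix ω j) ^ 2 ∂ℙ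
      = (∫ ω, ∑ j, (x₀ ω j - zstd ω j) ^ 2 ∂ℙ)
        - ∑ i, p i * ∑ j, (c i j) ^ 2 := by
  classical
  have hcardX : (0 : ℝ) < X.card := by exact_mod_cast hX.card_pos
  have hcardi : ∀ i, (0 : ℝ) < (Xc i).card := fun i => by exact_mod_cast (hne i).card_pos
  have hsub : ∀ i, ∀ x ∈ Xc i, x ∈ X := fun i x h => (hcover x).2 ⟨i, h⟩
  set A : Fin K → Set Ω := fun i => x₀ ⁻¹' (Xc i : Set (Fin d → ℝ)) with hA
  have hAm : ∀ i, MeasurableSet (A i) := fun i => hx (Xc i).measurableSet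
  have hAd : Pairwise (Function.onFun Disjoint A) := by
    intro i j hij
    exact Disjoint.preimage _ (Finset.disjoint_coe.2 (hdisj i j hij))
  have hpt : ∀ y ∈ X, (Measure.map x₀ ℙ).real {y} = 1 / X.card := by
    intro y hy
    rw [hxlaw, measureReal_def, PMF.toMeasure_apply_singleton _ _ (measurableSet_singleton y),
      PMF.uniformOfFinset_apply_of_mem hX hy]
    simp
  -- set integrals of functions of `x₀`
  have hset : ∀ i, ∀ g : (Fin d → ℝ) → ℝ, Measurable g →
      ∫ ω in A i, g (x₀ ω) ∂ℙ = (∑ y ∈ Xc i, g y) / X.card := by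
    intro i g hg
    rw [← setIntegral_map (Xc i).measurableSet hg.aestronglyMeasurable hx.aemeasurable,
      setIntegral_finset _ (by
        haveI : IsProbabilityMeasure (Measure.map x₀ (ℙ : Measure Ω)) :=
          Measure.isProbabilityMeasure_map hx.aemeasurable
        exact IntegrableOn.finset), Finset.sum_div]
    refine Finset.sum_congr rfl fun y hy => ?_
    rw [hpt y (hsub i y hy), smul_eq_mul]
    ring
  have hPA : ∀ i, (ℙ : Measure Ω).real (A i) = p i := by
    intro i
    have h := hset i (fun _ => 1) measurable_const
    simp only [setIntegral_const, smul_eq_mul, mul_one, Finset.sum_const, nsmul_eq_mul] at h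
    rw [h, hp]
  have hp0 : ∀ i, 0 < p i := fun i => by rw [hp]; exact div_pos (hcardi i) hcardX
  have hPA0 : ∀ i, (ℙ : Measure Ω) (A i) ≠ 0 := by
    intro i h
    have h1 := hPA i
    rw [measureReal_def, h] at h1
    have h2 := hp0 i
    simp at h1
    linarith
  have hae : ∀ᵐ ω ∂(ℙ : Measure Ω), x₀ ω ∈ X := by
    have h : ∀ᵐ y ∂(Measure.map x₀ (ℙ : Measure Ω)), y ∈ (X : Set (Fin d → ℝ)) := by
      rw [hxlaw, ae_iff]
      change (PMF.uniformOfFinset X hX).toMeasure ((X : Set (Fin d → ℝ))ᶜ) = 0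
      rw [PMF.toMeasure_apply_eq_zero_iff _ X.measurableSet.compl, PMF.support_uniformOfFinset]
      exact disjoint_compl_right
    exact ae_of_ae_map hx.aemeasurable h
  have hxj : ∀ j, Measurable (fun ω => x₀ ω j) := fun j => (measurable_pi_apply j).comp hx
  have hL : ∀ j, MemLp (fun ω => x₀ ω j) 2 (ℙ : Measure Ω) := by
    intro j
    refine MemLp.of_bound (hxj j).aestronglyMeasurable (∑ y ∈ X, |y j|) ?_
    filter_upwards [hae] with ω hω
    rw [Real.norm_eq_abs]
    exact Finset.single_le_sum (f := fun y : Fin d → ℝ => |y j|) (fun y _ => abs_nonneg _) hω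
  have hLi : ∀ i j, MemLp (fun ω => x₀ ω j) 2 (ℙ[|A i]) := by
    intro i j
    have h1 : MemLp (fun ω => x₀ ω j) 2 ((ℙ : Measure Ω).restrict (A i)) := (hL j).restrict _
    exact h1.smul_measure (ENNReal.inv_ne_top.2 (hPA0 i))
  have hcond : ∀ i, ∀ h : Ω → ℝ, ∫ ω, h ω ∂(ℙ[|A i]) = (p i)⁻¹ * ∫ ω in A i, h ω ∂ℙ := by
    intro i h
    rw [ProbabilityTheory.cond, integral_smul_measure, ENNReal.toReal_inv, ← measureReal_def,
      hPA, smul_eq_mul]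
  have hU : ∀ h : Ω → ℝ, (∀ i, IntegrableOn h (A i) ℙ) →
      ∫ ω, h ω ∂ℙ = ∑ i, ∫ ω in A i, h ω ∂ℙ := by
    intro h hh
    rw [← integral_iUnion_fintype hAm hAd hh]
    symm
    have : (⋃ i, A i) =ᵐ[(ℙ : Measure Ω)] Set.univ := by
      rw [Filter.eventuallyEq_univ]
      filter_upwards [hae] with ω hω
      obtain ⟨i, hi⟩ := (hcover _).1 hω
      exact Set.mem_iUnion.2 ⟨i, hi⟩
    rw [setIntegral_congr_set this, setIntegral_univ]
  have hstd := (effort_aux ℙ x₀ zstd 0 hx hzs hL hzslaw hzsindep).2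
  have hmix : ∀ i, IntegrableOn (fun ω => ∑ j, (x₀ ω j - zmix ω j) ^ 2) (A i) ℙ ∧
      ∫ ω in A i, ∑ j, (x₀ ω j - zmix ω j) ^ 2 ∂ℙ
        = ∑ j, ((∫ ω in A i, (x₀ ω j) ^ 2 ∂ℙ) - p i * c i j ^ 2 + p i) := by
    intro i
    haveI : IsProbabilityMeasure (ℙ[|A i]) := cond_isProbabilityMeasure (hPA0 i)
    obtain ⟨h1, h2⟩ := effort_aux (ℙ[|A i]) x₀ zmix (c i) hx hzm (hLi i) (hzmlaw i) (hzmindep i)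
    constructor
    · rw [ProbabilityTheory.cond] at h1
      exact (integrable_smul_measure (ENNReal.inv_ne_zero.2 (measure_ne_top _ _))
        (ENNReal.inv_ne_top.2 (hPA0 i))).1 h1
    · simp only [hcond] at h2
      have hpi := (hp0 i).ne'
      have h3 := congrArg (fun t => p i * t) h2
      simp only [mul_inv_cancel_left₀ hpi] at h3
      rw [h3, Finset.mul_sum]
      refine Finset.sum_congr rfl fun j _ => ?_
      have h4 : ∫ ω in A i, x₀ ω j ∂ℙ = p i * c i j := by
        rw [hset i (fun y => y j) (measurable_pi_apply j), hp, hc]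
        have := (hcardi i).ne'
        field_simp
      rw [h4]
      field_simp
      ring
  have hsq : ∀ j, ∫ ω, (x₀ ω j) ^ 2 ∂ℙ = ∑ i, ∫ ω in A i, (x₀ ω j) ^ 2 ∂ℙ := fun j =>
    hU _ fun i => (hL j).integrable_sq.integrableOn
  have hpsum : ∑ i, p i = 1 := by
    have h := hU (fun _ => 1) fun i => (integrable_const _).integrableOn
    simp only [setIntegral_const, smul_eq_mul, mul_one, hPA] at h
    rw [← h]
    simp
  rw [hU _ fun i => (hmix i).1, hstd, Finset.sum_congr rfl fun i _ => (hmix i).2]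
  simp only [Pi.zero_apply, mul_zero, sub_zero, hsq, Finset.mul_sum]
  rw [Finset.sum_comm, Finset.sum_comm (f := fun i j => p i * c i j ^ 2),
    ← Finset.sum_sub_distrib]
  refine Finset.sum_congr rfl fun j _ => ?_
  rw [Finset.sum_add_distrib, Finset.sum_sub_distrib, hpsum]
  ring
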